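/- If the list (γ_1,…,γ_n) of reals is weakly N-dependent, i.e. there exist integers α_1,…,α_n, not all zero, with |α_i| ≤ N+1 for all i and |α_i| = N+1 for at most one index i, such that α_1γ_1 + ⋯ + α_nγ_n = 0, then there exists a nonzero vector v ∈ L(K;(γ_1,…,γ_n)) with ‖v‖² < (n² + n)N² + (2n + 2)N + 2. -/

import Mathlib

/-- Membership in the lattice `L(K; (γ_1, …, γ_n)) ⊆ ℤ^{n+1}`: the vectors
`(a_1, …, a_n, K(a_1 γ_1' + ⋯ + a_n γ_n'))` with `a_i ∈ ℤ`, where `γ_i' = ⌊K γ_i⌋ / K`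
(so the last coordinate is `∑ i, a_i ⌊K γ_i⌋`). -/
def inLattice (K : ℕ) {n : ℕ} (γ : Fin n → ℝ) (v : Fin (n + 1) → ℤ) : Prop :=
  ∃ a : Fin n → ℤ, (∀ i : Fin n, v i.castSucc = a i) ∧
    v (Fin.last n) = ∑ i, a i * ⌊(K : ℝ) * γ i⌋

/-!
The vector of `L(K; γ)` with first coordinates `α` has last coordinate
`∑ α_i ⌊K γ_i⌋ = -∑ α_i {K γ_i}`, because the relation `∑ α_i γ_i = 0` cancels the main term. Its
absolute value is therefore less than `∑ |α_i| ≤ n N + 1`, while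
`∑ α_i ^ 2 ≤ n N ^ 2 + ((N + 1) ^ 2 - N ^ 2)`, since at most one coefficient exceeds `N` in absolute
value.
-/

section AtMostOneLargeTerm

variable {ι R : Type*} {s : Finset ι} {f : ι → R} {a b : R}

theorem sum_le_card_nsmul_add_sub_of_subsingleton
    [AddCommGroup R] [LinearOrder R] [IsOrderedAddMonoid R]
    (hab : a ≤ b) (hfb : ∀ i ∈ s, f i ≤ b) (hlarge : {i | i ∈ s ∧ a < f i}.Subsingleton) :
    ∑ i ∈ s, f i ≤ s.card • a + (b - a) := by
  have hcard : (s.filter (a < f ·)).card ≤ 1 :=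
    Finset.card_le_one.mpr fun i hi j hj =>
      hlarge (Finset.mem_filter.mp hi) (Finset.mem_filter.mp hj)
  have hterm : ∀ i ∈ s, f i ≤ a + if a < f i then b - a else 0 := by
    intro i hi
    split_ifs with h
    · simpa only [add_sub_cancel] using hfb i hi
    · simpa only [add_zero] using not_lt.mp h
  calc ∑ i ∈ s, f i ≤ ∑ i ∈ s, (a + if a < f i then b - a else 0) := Finset.sum_le_sum hterm
    _ = s.card • a + (s.filter (a < f ·)).card • (b - a) := by
      rw [Finset.sum_add_distrib, Finset.sum_const, ← Finset.sum_filter, Finset.sum_const]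
    _ ≤ s.card • a + (b - a) := by
      gcongr
      simpa only [one_nsmul] using nsmul_le_nsmul_left (sub_nonneg.mpr hab) hcard

theorem sum_sq_le_card_nsmul_add_sub_of_subsingleton
    [Ring R] [LinearOrder R] [IsStrictOrderedRing R]
    (ha : 0 ≤ a) (hab : a ≤ b) (hfb : ∀ i ∈ s, |f i| ≤ b)
    (hlarge : {i | i ∈ s ∧ a < |f i|}.Subsingleton) :
    ∑ i ∈ s, f i ^ 2 ≤ s.card • a ^ 2 + (b ^ 2 - a ^ 2) := by
  refine sum_le_card_nsmul_add_sub_of_subsingleton (pow_le_pow_left₀ ha hab 2)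
    (fun i hi => sq_le_sq.mpr ((hfb i hi).trans (le_abs_self b))) (hlarge.anti ?_)
  rintro i ⟨hi, hlt⟩
  exact ⟨hi, (le_abs_self a).trans_lt (sq_lt_sq.mp hlt)⟩

end AtMostOneLargeTerm

section Floor

variable {ι R : Type*} [Ring R] [LinearOrder R] [FloorRing R] {s : Finset ι} {a x : ι → R}

theorem sum_mul_floor_eq_neg_sum_mul_fract (hrel : ∑ i ∈ s, a i * x i = 0) :
    ∑ i ∈ s, a i * (⌊x i⌋ : R) = -∑ i ∈ s, a i * Int.fract (x i) := by
  rw [eq_neg_iff_add_eq_zero, ← Finset.sum_add_distrib, ← hrel]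
  simp only [← mul_add, Int.floor_add_fract]

variable [IsStrictOrderedRing R]

theorem abs_sum_mul_fract_lt_sum_abs (ha : ∃ i ∈ s, a i ≠ 0) :
    |∑ i ∈ s, a i * Int.fract (x i)| < ∑ i ∈ s, |a i| := by
  obtain ⟨k, hks, hk⟩ := ha
  calc |∑ i ∈ s, a i * Int.fract (x i)| ≤ ∑ i ∈ s, |a i| * Int.fract (x i) := by
        simpa only [abs_mul, Int.abs_fract] using
          Finset.abs_sum_le_sum_abs (fun i => a i * Int.fract (x i)) s
    _ < ∑ i ∈ s, |a i| :=
        Finset.sum_lt_sum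
          (fun i _ => mul_le_of_le_one_right (abs_nonneg _) (Int.fract_lt_one _).le)
          ⟨k, hks, mul_lt_of_lt_one_right (abs_pos.mpr hk) (Int.fract_lt_one _)⟩

theorem abs_sum_mul_floor_lt_sum_abs (ha : ∃ i ∈ s, a i ≠ 0) (hrel : ∑ i ∈ s, a i * x i = 0) :
    |∑ i ∈ s, a i * (⌊x i⌋ : R)| < ∑ i ∈ s, |a i| := by
  rw [sum_mul_floor_eq_neg_sum_mul_fract hrel, abs_neg]
  exact abs_sum_mul_fract_lt_sum_abs ha

end Floor

section LatticeVector

variable {K n : ℕ} {γ : Fin n → ℝ} {a : Fin n → ℤ}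

/-- The vector of `L(K; γ)` whose first `n` coordinates are `a`. -/
noncomputable def latticeVector (K : ℕ) {n : ℕ} (γ : Fin n → ℝ) (a : Fin n → ℤ) :
    Fin (n + 1) → ℤ :=
  Fin.snoc (α := fun _ => ℤ) a (∑ i, a i * ⌊(K : ℝ) * γ i⌋)

theorem latticeVector_castSucc (i : Fin n) : latticeVector K γ a i.castSucc = a i :=
  Fin.snoc_castSucc (α := fun _ => ℤ) _ _ _

theorem latticeVector_last :
    latticeVector K γ a (Fin.last n) = ∑ i, a i * ⌊(K : ℝ) * γ i⌋ :=
  Fin.snoc_last (α := fun _ => ℤ) _ _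

theorem inLattice_latticeVector : inLattice K γ (latticeVector K γ a) :=
  ⟨a, latticeVector_castSucc, latticeVector_last⟩

theorem latticeVector_ne_zero (ha : a ≠ 0) : latticeVector K γ a ≠ 0 := fun h =>
  ha <| funext fun i => (latticeVector_castSucc i).symm.trans (congrFun h i.castSucc)

theorem abs_latticeVector_last_lt_sum_abs (ha : a ≠ 0) (hrel : ∑ i, (a i : ℝ) * γ i = 0) :
    |latticeVector K γ a (Fin.last n)| < ∑ i, |a i| := by
  obtain ⟨k, hk⟩ := Function.ne_iff.mp ha
  have hrelK : ∑ i, (a i : ℝ) * (K * γ i) = 0 := by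
    simp only [mul_left_comm _ (K : ℝ), ← Finset.mul_sum, hrel, mul_zero]
  rw [latticeVector_last]
  exact_mod_cast abs_sum_mul_floor_lt_sum_abs ⟨k, Finset.mem_univ k, Int.cast_ne_zero.mpr hk⟩ hrelK

theorem sum_sq_latticeVector_lt (ha : a ≠ 0) (hrel : ∑ i, (a i : ℝ) * γ i = 0) :
    ∑ i, latticeVector K γ a i ^ 2 < ∑ i, a i ^ 2 + (∑ i, |a i|) ^ 2 := by
  simp only [Fin.sum_univ_castSucc, latticeVector_castSucc]
  rw [add_lt_add_iff_left, sq_lt_sq]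
  exact (abs_latticeVector_last_lt_sum_abs ha hrel).trans_le (le_abs_self _)

end LatticeVector

/-- If `(γ_1, …, γ_n)` is weakly `N`-dependent, then `L(K; (γ_1, …, γ_n))` contains a
nonzero vector `v` with `‖v‖² < (n² + n)N² + (2n + 2)N + 2`. -/
theorem weakly_dependent_short_vector
    (K N n : ℕ) (hK : 0 < K) (hN : 0 < N) (γ : Fin n → ℝ)
    (α : Fin n → ℤ) (hα : α ≠ 0)
    (hbd : ∀ i, |α i| ≤ (N : ℤ) + 1)
    (hone : ∀ i j, |α i| = (N : ℤ) + 1 → |α j| = (N : ℤ) + 1 → i = j)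
    (hrel : ∑ i, (α i : ℝ) * γ i = 0) :
    ∃ v : Fin (n + 1) → ℤ, v ≠ 0 ∧ inLattice K γ v ∧
      (∑ i, ((v i : ℝ)) ^ 2) <
        ((n : ℝ) ^ 2 + (n : ℝ)) * (N : ℝ) ^ 2 + (2 * (n : ℝ) + 2) * (N : ℝ) + 2 := by
  have hlarge : {i | i ∈ Finset.univ ∧ (N : ℤ) < |α i|}.Subsingleton := fun i hi j hj =>
    hone i j ((hbd i).antisymm hi.2) ((hbd j).antisymm hj.2)
  have hN1 : (N : ℤ) ≤ N + 1 := Int.le_add_one le_rfl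
  have habs : ∑ i, |α i| ≤ n * N + 1 := by
    simpa using sum_le_card_nsmul_add_sub_of_subsingleton hN1 (fun i _ => hbd i) hlarge
  have hsq : ∑ i, α i ^ 2 ≤ n * (N : ℤ) ^ 2 + ((N + 1) ^ 2 - N ^ 2) := by
    simpa using sum_sq_le_card_nsmul_add_sub_of_subsingleton N.cast_nonneg hN1
      (fun i _ => hbd i) hlarge
  refine ⟨latticeVector K γ α, latticeVector_ne_zero hα, inLattice_latticeVector, ?_⟩
  have hshort : ∑ i, latticeVector K γ α i ^ 2 <
      ((n : ℤ) ^ 2 + n) * (N : ℤ) ^ 2 + (2 * n + 2) * N + 2 :=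
    calc ∑ i, latticeVector K γ α i ^ 2 < ∑ i, α i ^ 2 + (∑ i, |α i|) ^ 2 :=
          sum_sq_latticeVector_lt hα hrel
      _ ≤ n * (N : ℤ) ^ 2 + ((N + 1) ^ 2 - N ^ 2) + (n * N + 1) ^ 2 := by gcongr
      _ = ((n : ℤ) ^ 2 + n) * (N : ℤ) ^ 2 + (2 * n + 2) * N + 2 := by ring
  exact_mod_cast hshort
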